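/- arXiv:2308.08439 — 4 statements merged into one kernel-verified Lean document; each statement's English description precedes it below -/
import Mathlib

section
/- The values of the characteristic functions at the integers uniquely recover K: with convergence in L²(0, π), K(x) = Σ_{n ∈ ℤ} ((−1)ⁿ/π)·(Θ₁(n) + i·Θ₂(n))·e^{2inx}, where Θ₁(λ) = (Δ₁(λ) + Δ₁(−λ))/2 and Θ₂(λ) = (Δ₂(λ) − Δ₂(−λ))/2. -/
open MeasureTheory Real Set Filter

noncomputable def Delta1 (a₁ : ℝ) (K G : ℝ → ℂ) (lam : ℂ) : ℂ :=
  Complex.sin (π * lam)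
    + (∫ x in (a₁ / 2)..(π - a₁ / 2), K x * Complex.cos (lam * ((π - 2 * x : ℝ) : ℂ)))
    - ∫ x in (a₁ / 2)..(π - a₁ / 2), G x * Complex.sin (lam * ((π - 2 * x : ℝ) : ℂ))

noncomputable def Delta2 (a₁ : ℝ) (K G : ℝ → ℂ) (lam : ℂ) : ℂ :=
  -Complex.cos (π * lam)
    + (∫ x in (a₁ / 2)..(π - a₁ / 2), K x * Complex.sin (lam * ((π - 2 * x : ℝ) : ℂ)))
    + ∫ x in (a₁ / 2)..(π - a₁ / 2), G x * Complex.cos (lam * ((π - 2 * x : ℝ) : ℂ))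

noncomputable def Theta1 (a₁ : ℝ) (K G : ℝ → ℂ) (lam : ℂ) : ℂ :=
  (Delta1 a₁ K G lam + Delta1 a₁ K G (-lam)) / 2

noncomputable def Theta2 (a₁ : ℝ) (K G : ℝ → ℂ) (lam : ℂ) : ℂ :=
  (Delta2 a₁ K G lam - Delta2 a₁ K G (-lam)) / 2


instance factPiPos : Fact (0 < π) := ⟨Real.pi_pos⟩

lemma theta1_eq (a₁ : ℝ) (K G : ℝ → ℂ) (lam : ℂ) :
    Theta1 a₁ K G lam =
      ∫ x in (a₁ / 2)..(π - a₁ / 2), K x * Complex.cos (lam * ((π - 2 * x : ℝ) : ℂ)) := by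
  unfold Theta1 Delta1
  simp only [neg_mul, mul_neg, Complex.cos_neg, Complex.sin_neg, intervalIntegral.integral_neg]
  ring

lemma theta2_eq (a₁ : ℝ) (K G : ℝ → ℂ) (lam : ℂ) :
    Theta2 a₁ K G lam =
      ∫ x in (a₁ / 2)..(π - a₁ / 2), K x * Complex.sin (lam * ((π - 2 * x : ℝ) : ℂ)) := by
  unfold Theta2 Delta2
  simp only [neg_mul, mul_neg, Complex.cos_neg, Complex.sin_neg, intervalIntegral.integral_neg]
  ring

lemma coeff_eq (a₁ : ℝ) (ha₁ : 0 < a₁) (ha₁' : a₁ < π) (K G : ℝ → ℂ)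
    (hK : MemLp K 2 (volume.restrict (Ioc 0 (0 + π))))
    (hK0 : ∀ᵐ x ∂(volume : Measure ℝ), x ∉ Ioo (a₁ / 2) (π - a₁ / 2) → K x = 0) (n : ℤ) :
    fourierCoeff (AddCircle.liftIoc π 0 K) n = ((-1 : ℂ) ^ n / (π : ℂ)) *
            (Theta1 a₁ K G (n : ℂ) + Complex.I * Theta2 a₁ K G (n : ℂ)) := by
  have hle : a₁ / 2 ≤ π - a₁ / 2 := by linarith
  have hsub : Ioc (a₁ / 2) (π - a₁ / 2) ⊆ Ioc 0 (0 + π) := by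
    intro x hx
    exact ⟨by linarith [hx.1], by linarith [hx.2]⟩
  have hint : IntervalIntegrable K volume (a₁ / 2) (π - a₁ / 2) := by
    rw [intervalIntegrable_iff_integrableOn_Ioc_of_le hle]
    have : IntegrableOn K (Ioc 0 (0 + π)) := hK.integrable (by norm_num)
    exact this.mono_set hsub
  rw [theta1_eq, theta2_eq, ← intervalIntegral.integral_const_mul,
    ← intervalIntegral.integral_add, ← intervalIntegral.integral_const_mul]
  rotate_left
  · exact hint.mul_continuousOn (by fun_prop)
  · exact (hint.mul_continuousOn (by fun_prop)).const_mul _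
  rw [fourierCoeff_liftIoc_eq, fourierCoeffOn_eq_integral,
    intervalIntegral.integral_of_le (by simpa using Real.pi_pos.le),
    intervalIntegral.integral_of_le hle, ← integral_smul]
  rw [← integral_indicator measurableSet_Ioc, ← integral_indicator measurableSet_Ioc]
  apply integral_congr_ae
  filter_upwards [hK0] with x hx
  by_cases hx1 : x ∈ Ioc (a₁ / 2) (π - a₁ / 2)
  · rw [indicator_of_mem (hsub hx1), indicator_of_mem hx1, fourier_coe_apply]
    have e1 : Complex.exp (2 * π * Complex.I * ((-n : ℤ) : ℂ) * x / ((0 + π - 0 : ℝ) : ℂ))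
        = Complex.exp (-(2 * Complex.I * n * x)) := by
      congr 1
      have : (π : ℂ) ≠ 0 := by exact_mod_cast Real.pi_ne_zero
      push_cast
      field_simp
      simp
      ring
    have e2 : Complex.cos ((n : ℂ) * ((π - 2 * x : ℝ) : ℂ))
        + Complex.sin ((n : ℂ) * ((π - 2 * x : ℝ) : ℂ)) * Complex.I
        = (-1) ^ n * Complex.exp (-(2 * Complex.I * n * x)) := by
      rw [← Complex.exp_mul_I, ← Complex.exp_pi_mul_I, ← Complex.exp_int_mul, ← Complex.exp_add]
      congr 1
      push_cast
      ring
    have e3 : ((-1 : ℂ) ^ n) * (-1) ^ n = 1 := by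
      rw [← mul_zpow]; simp
    rw [e1]
    have : (-1 : ℂ) ^ n / π * (K x * Complex.cos ((n : ℂ) * ((π - 2 * x : ℝ) : ℂ))
        + Complex.I * (K x * Complex.sin ((n : ℂ) * ((π - 2 * x : ℝ) : ℂ))))
        = (-1) ^ n / π * K x * ((-1) ^ n * Complex.exp (-(2 * Complex.I * n * x))) := by
      rw [← e2]; ring
    rw [this]
    have : (-1 : ℂ) ^ n / π * K x * ((-1) ^ n * Complex.exp (-(2 * Complex.I * n * x)))
        = ((-1 : ℂ) ^ n * (-1) ^ n) / π * K x * Complex.exp (-(2 * Complex.I * n * x)) := by ring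
    rw [this, e3, Complex.real_smul, smul_eq_mul]
    push_cast
    ring
  · have : K x = 0 := hx fun h => hx1 (Ioo_subset_Ioc_self h)
    rw [indicator_of_notMem hx1]
    simp [indicator, this]

/-- The values of the characteristic functions at the integers uniquely recover `K`:
with convergence in `L²(0,π)`,
`K(x) = Σ_{n ∈ ℤ} ((−1)ⁿ/π)·(Θ₁(n) + i·Θ₂(n))·e^{2inx}`. -/
theorem K_recovered_from_spectra (a₁ : ℝ) (ha₁ : 0 < a₁) (ha₁' : a₁ < π)
    (K G : ℝ → ℂ)
    (hK : MemLp K 2 (volume.restrict (Ioo 0 π)))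
    (hG : MemLp G 2 (volume.restrict (Ioo 0 π)))
    (hK0 : ∀ᵐ x ∂(volume : Measure ℝ), x ∉ Ioo (a₁ / 2) (π - a₁ / 2) → K x = 0)
    (hG0 : ∀ᵐ x ∂(volume : Measure ℝ), x ∉ Ioo (a₁ / 2) (π - a₁ / 2) → G x = 0) :
    Tendsto
      (fun N : ℕ => eLpNorm
        (fun x : ℝ => K x - ∑ n ∈ Finset.Icc (-(N : ℤ)) (N : ℤ),
          ((-1 : ℂ) ^ n / (π : ℂ)) *
            (Theta1 a₁ K G (n : ℂ) + Complex.I * Theta2 a₁ K G (n : ℂ)) *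
            Complex.exp (2 * Complex.I * (n : ℂ) * (x : ℂ)))
        2 (volume.restrict (Ioo 0 π)))
      atTop (nhds 0) := by
  have hr : (volume.restrict (Ioo 0 π) : Measure ℝ) = volume.restrict (Ioc 0 (0 + π)) := by
    rw [zero_add]; exact Measure.restrict_congr_set Ioo_ae_eq_Ioc
  rw [hr] at hK ⊢
  have hV := hK.memLp_liftIoc
  have hH := hV.haarAddCircle
  have hsum := (hasSum_fourier_series_L2 hH.toLp).comp (Finset.tendsto_Icc_neg (R := ℤ))
  let P : ℕ → C(AddCircle π, ℂ) := fun N => ∑ n ∈ Finset.Icc (-(N : ℤ)) (N : ℤ),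
    fourierCoeff (AddCircle.liftIoc π 0 K) n • fourier n
  have hP : ∀ N : ℕ, ((fun s : Finset ℤ => ∑ i ∈ s,
      fourierCoeff (hH.toLp : AddCircle π → ℂ) i • fourierLp 2 i) ∘
      fun N : ℕ => Finset.Icc (-(N : ℤ)) (N : ℤ)) N =
      ContinuousMap.toLp 2 AddCircle.haarAddCircle ℂ (P N) := by
    intro N
    simp only [P, Function.comp_apply, map_sum, map_smul, fourierLp,
      fourierCoeff_congr_ae hH.coeFn_toLp]
  have h1 := (Lp.tendsto_Lp_iff_tendsto_eLpNorm _ _ hH).1 (hsum.congr hP)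
  have hc : ENNReal.ofReal π ^ (1 / (2 : ENNReal)).toReal ≠ ⊤ := by finiteness
  have h2 := ENNReal.Tendsto.const_mul (a := ENNReal.ofReal π ^ (1 / (2 : ENNReal)).toReal) h1
    (Or.inr hc)
  rw [mul_zero] at h2
  refine h2.congr fun N => ?_
  rw [← smul_eq_mul, ← eLpNorm_smul_measure_of_ne_top (by norm_num),
    ← AddCircle.volume_eq_smul_haarAddCircle]
  have hae : (ContinuousMap.toLp 2 AddCircle.haarAddCircle ℂ (P N) : AddCircle π → ℂ)
      =ᵐ[volume] P N := by
    rw [AddCircle.volume_eq_smul_haarAddCircle]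
    exact Measure.ae_smul_measure (ContinuousMap.coeFn_toLp _ _) _
  rw [eLpNorm_congr_ae (hae.sub (EventuallyEq.refl _ (AddCircle.liftIoc π 0 K))),
    ← eLpNorm_comp_measurePreserving
      ((P N).continuous.aestronglyMeasurable.sub hV.aestronglyMeasurable)
      (AddCircle.measurePreserving_mk π 0), ← eLpNorm_neg]
  apply eLpNorm_congr_ae
  filter_upwards [ae_restrict_mem measurableSet_Ioc] with x hx
  simp only [Pi.neg_apply, Function.comp_apply, Pi.sub_apply, neg_sub,
    AddCircle.liftIoc_coe_apply hx, P, ContinuousMap.sum_apply, ContinuousMap.smul_apply,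
    fourier_coe_apply, smul_eq_mul, coeff_eq a₁ ha₁ ha₁' K G hK hK0]
  congr 1
  refine Finset.sum_congr rfl fun n _ => ?_
  congr 2
  have : (π : ℂ) ≠ 0 := by exact_mod_cast Real.pi_ne_zero
  field_simp
end

section
/- The values of the characteristic functions at the integers uniquely recover G: with convergence in L²(0, π), G(x) = Σ_{n ∈ ℤ} ((−1)ⁿ/π)·(Θ₄(n) + i·Θ₃(n))·e^{2inx}, where Θ₃(λ) = (−Δ₁(λ) + Δ₁(−λ))/2 + sin(πλ) and Θ₄(λ) = (Δ₂(λ) + Δ₂(−λ))/2 + cos(πλ). -/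
open MeasureTheory Real Set Filter

noncomputable def Theta3 (a₁ : ℝ) (K G : ℝ → ℂ) (lam : ℂ) : ℂ :=
  (-Delta1 a₁ K G lam + Delta1 a₁ K G (-lam)) / 2 + Complex.sin (π * lam)

noncomputable def Theta4 (a₁ : ℝ) (K G : ℝ → ℂ) (lam : ℂ) : ℂ :=
  (Delta2 a₁ K G lam + Delta2 a₁ K G (-lam)) / 2 + Complex.cos (π * lam)


lemma aux_L2 {T : ℝ} [hT : Fact (0 < T)] (g : AddCircle T → ℂ)
    (hg : MemLp g 2 AddCircle.haarAddCircle) :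
    Tendsto (fun N : ℕ => eLpNorm (fun t => g t - ∑ n ∈ Finset.Icc (-(N : ℤ)) (N : ℤ),
      fourierCoeff g n * fourier n t) 2 (AddCircle.haarAddCircle (T := T))) atTop (nhds 0) := by
  have h := hasSum_fourier_series_L2 hg.toLp
  rw [HasSum, SummationFilter.unconditional_filter] at h
  have hI : Tendsto (fun N : ℕ => Finset.Icc (-(N : ℤ)) (N : ℤ)) atTop atTop := by
    refine tendsto_atTop_finset_of_monotone ?_ ?_
    · intro a b hab
      exact Finset.Icc_subset_Icc (by simpa using hab) (by simpa using hab)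
    · intro x
      exact ⟨x.natAbs, by rw [Finset.mem_Icc]; omega⟩
  have h2 := h.comp hI
  rw [tendsto_iff_edist_tendsto_0] at h2
  refine h2.congr fun N => ?_
  rw [edist_comm, Lp.edist_def]
  refine eLpNorm_congr_ae ?_
  have hs : (↑↑(∑ n ∈ Finset.Icc (-(N : ℤ)) (N : ℤ),
      fourierCoeff (hg.toLp) n • (fourierLp 2 n : Lp ℂ 2 (AddCircle.haarAddCircle (T := T)))) : AddCircle T → ℂ)
      =ᵐ[AddCircle.haarAddCircle] fun t => ∑ n ∈ Finset.Icc (-(N : ℤ)) (N : ℤ),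
        fourierCoeff g n * fourier n t := by
    have h3 : ∀ᵐ t ∂(AddCircle.haarAddCircle (T := T)), ∀ n : ℤ,
        (↑↑(fourierCoeff (hg.toLp) n • (fourierLp 2 n : Lp ℂ 2 (AddCircle.haarAddCircle (T := T)))) : AddCircle T → ℂ) t = fourierCoeff g n * fourier n t := by
      rw [ae_all_iff]
      intro n
      filter_upwards [Lp.coeFn_smul (fourierCoeff (hg.toLp) n)
        (fourierLp 2 n : Lp ℂ 2 (AddCircle.haarAddCircle (T := T))), coeFn_fourierLp 2 n] with t h1 h2
      rw [h1, Pi.smul_apply, h2, fourierCoeff_congr_ae hg.coeFn_toLp, smul_eq_mul]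
    filter_upwards [h3, Lp.coeFn_finsetSum (Finset.Icc (-(N : ℤ)) (N : ℤ)) (fun n =>
      fourierCoeff (hg.toLp) n • (fourierLp 2 n : Lp ℂ 2 (AddCircle.haarAddCircle (T := T))))] with t h4 h5
    rw [h5, Finset.sum_apply]
    exact Finset.sum_congr rfl fun n _ => h4 n
  filter_upwards [hs, hg.coeFn_toLp] with t h6 h7
  simp only [Pi.sub_apply, Function.comp]
  rw [h6, h7]

lemma aux_theta (a₁ : ℝ) (K G : ℝ → ℂ) (ha₁ : 0 < a₁) (ha₁' : a₁ < π)
    (hG : MemLp G 2 (volume.restrict (Ioo 0 π)))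
    (hG0 : ∀ᵐ x ∂(volume : Measure ℝ), x ∉ Ioo (a₁ / 2) (π - a₁ / 2) → G x = 0) (n : ℤ) :
    Theta4 a₁ K G (n : ℂ) + Complex.I * Theta3 a₁ K G (n : ℂ) =
      (-1 : ℂ) ^ n * ∫ x in (0 : ℝ)..π, Complex.exp (-(2 * Complex.I * n * x)) * G x := by
  have hle : a₁ / 2 ≤ π - a₁ / 2 := by linarith
  have hGi : IntervalIntegrable G volume (a₁ / 2) (π - a₁ / 2) := by
    rw [intervalIntegrable_iff_integrableOn_Ioo_of_le hle]
    have : IntegrableOn G (Ioo 0 π) := hG.integrable (by norm_num)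
    exact this.mono_set (Ioo_subset_Ioo (by linarith) (by linarith))
  have h4 : Theta4 a₁ K G (n : ℂ) = ∫ x in (a₁ / 2)..(π - a₁ / 2),
      G x * Complex.cos (n * ((π - 2 * x : ℝ) : ℂ)) := by
    simp only [Theta4, Delta2, neg_mul, mul_neg, Complex.cos_neg, Complex.sin_neg,
      intervalIntegral.integral_neg]
    ring
  have h3 : Theta3 a₁ K G (n : ℂ) = ∫ x in (a₁ / 2)..(π - a₁ / 2),
      G x * Complex.sin (n * ((π - 2 * x : ℝ) : ℂ)) := by
    simp only [Theta3, Delta1, neg_mul, mul_neg, Complex.cos_neg, Complex.sin_neg,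
      intervalIntegral.integral_neg]
    ring
  rw [h3, h4, ← intervalIntegral.integral_const_mul, ← intervalIntegral.integral_add
    (hGi.mul_continuousOn (by fun_prop)) ((hGi.mul_continuousOn (by fun_prop)).const_mul _)]
  have h5 : ∀ x : ℝ, G x * Complex.cos (n * ((π - 2 * x : ℝ) : ℂ)) +
      Complex.I * (G x * Complex.sin (n * ((π - 2 * x : ℝ) : ℂ))) =
      (-1 : ℂ) ^ n * (Complex.exp (-(2 * Complex.I * n * x)) * G x) := by
    intro x
    have e1 : (-1 : ℂ) ^ n = Complex.exp (n * (π * Complex.I)) := by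
      rw [Complex.exp_int_mul, Complex.exp_pi_mul_I]
    rw [e1, ← mul_assoc (Complex.exp _), ← Complex.exp_add]
    have e2 : (n * (π * Complex.I) + -(2 * Complex.I * n * x) : ℂ) =
        (n * ((π - 2 * x : ℝ) : ℂ)) * Complex.I := by
      push_cast; ring
    rw [e2, Complex.exp_mul_I]
    ring
  simp_rw [h5]
  rw [intervalIntegral.integral_const_mul]
  congr 1
  rw [intervalIntegral.integral_of_le hle, intervalIntegral.integral_of_le pi_pos.le]
  symm
  refine setIntegral_eq_of_subset_of_ae_sdiff_eq_zero measurableSet_Ioc.nullMeasurableSet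
    (Ioc_subset_Ioc (by linarith) (by linarith)) ?_
  filter_upwards [hG0] with x hx hx2
  rw [hx fun h => hx2.2 (Ioo_subset_Ioc_self h), mul_zero]

/-- The values of the characteristic functions at the integers uniquely recover `G`:
with convergence in `L²(0,π)`,
`G(x) = Σ_{n ∈ ℤ} ((−1)ⁿ/π)·(Θ₄(n) + i·Θ₃(n))·e^{2inx}`. -/
theorem G_recovered_from_spectra (a₁ : ℝ) (ha₁ : 0 < a₁) (ha₁' : a₁ < π)
    (K G : ℝ → ℂ)
    (hK : MemLp K 2 (volume.restrict (Ioo 0 π)))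
    (hG : MemLp G 2 (volume.restrict (Ioo 0 π)))
    (hK0 : ∀ᵐ x ∂(volume : Measure ℝ), x ∉ Ioo (a₁ / 2) (π - a₁ / 2) → K x = 0)
    (hG0 : ∀ᵐ x ∂(volume : Measure ℝ), x ∉ Ioo (a₁ / 2) (π - a₁ / 2) → G x = 0) :
    Tendsto
      (fun N : ℕ => eLpNorm
        (fun x : ℝ => G x - ∑ n ∈ Finset.Icc (-(N : ℤ)) (N : ℤ),
          ((-1 : ℂ) ^ n / (π : ℂ)) *
            (Theta4 a₁ K G (n : ℂ) + Complex.I * Theta3 a₁ K G (n : ℂ)) *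
            Complex.exp (2 * Complex.I * (n : ℂ) * (x : ℂ)))
        2 (volume.restrict (Ioo 0 π)))
      atTop (nhds 0) := by
  haveI : Fact (0 < π) := ⟨pi_pos⟩
  have hIoc : (volume : Measure ℝ).restrict (Ioo 0 π) = volume.restrict (Ioc 0 (0 + π)) := by
    rw [zero_add]; exact restrict_Ioo_eq_restrict_Ioc
  have hG1 := hG
  rw [hIoc] at hG1
  have hgv := hG1.memLp_liftIoc
  have hg := hgv.haarAddCircle
  set g := AddCircle.liftIoc π 0 G with hgdef
  have hlim := aux_L2 g hg
  have hc : ∀ n : ℤ, fourierCoeff g n = ((-1 : ℂ) ^ n / (π : ℂ)) *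
      (Theta4 a₁ K G (n : ℂ) + Complex.I * Theta3 a₁ K G (n : ℂ)) := by
    intro n
    rw [aux_theta a₁ K G ha₁ ha₁' hG hG0 n, fourierCoeff_eq_intervalIntegral g n 0]
    have : ∫ x in (0 : ℝ)..0 + π, @fourier π (-n) x • g x =
        ∫ x in (0 : ℝ)..π, Complex.exp (-(2 * Complex.I * n * x)) * G x := by
      rw [zero_add]
      refine intervalIntegral.integral_congr_ae (ae_of_all _ fun x hx => ?_)
      rw [uIoc_of_le pi_pos.le] at hx
      rw [hgdef, AddCircle.liftIoc_zero_coe_apply hx, fourier_coe_apply, smul_eq_mul]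
      congr 2
      have : (π : ℂ) ≠ 0 := by exact_mod_cast pi_ne_zero
      push_cast
      field_simp
    rw [this, ← mul_assoc, div_mul_eq_mul_div, ← zpow_add₀ (by norm_num),
      Even.neg_one_zpow ⟨n, rfl⟩, Complex.real_smul]
    push_cast
    rfl
  have hlim2 := ENNReal.Tendsto.const_mul (a := ENNReal.ofReal π ^ (1 / (2 : ENNReal)).toReal) hlim
    (Or.inr (by finiteness))
  rw [mul_zero] at hlim2
  refine hlim2.congr fun N => ?_
  have hm : AEStronglyMeasurable (fun t => g t - ∑ n ∈ Finset.Icc (-(N : ℤ)) (N : ℤ),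
      fourierCoeff g n * fourier n t) (volume : Measure (AddCircle π)) := by
    refine hgv.1.sub (Continuous.aestronglyMeasurable ?_)
    exact continuous_finsetSum _ fun n _ => continuous_const.mul (map_continuous (fourier n))
  rw [hIoc]
  have e1 := eLpNorm_comp_measurePreserving (p := 2) hm (AddCircle.measurePreserving_mk π 0)
  rw [AddCircle.volume_eq_smul_haarAddCircle,
    eLpNorm_smul_measure_of_ne_top (by simp), smul_eq_mul] at e1
  rw [← e1]
  refine eLpNorm_congr_ae ?_
  filter_upwards [ae_restrict_mem measurableSet_Ioc] with x hx
  simp only [Function.comp]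
  rw [hgdef, AddCircle.liftIoc_coe_apply hx, ← hgdef]
  congr 1
  refine Finset.sum_congr rfl fun n _ => ?_
  rw [hc, fourier_coe_apply]
  congr 2
  have : (π : ℂ) ≠ 0 := by exact_mod_cast pi_ne_zero
  field_simp
end

section
/- The entire function Δ₁ has infinitely many zeros accumulating near the integers: there exist N ∈ ℕ and a sequence (λ_n)_{n ∈ ℤ, |n| ≥ N} of complex numbers such that for every n with |n| ≥ N, λ_n is the unique zero of Δ₁ in the disk {λ ∈ ℂ : |λ − n| < 1/2}, and λ_n = n + κ_n with κ_n → 0 as |n| → ∞. -/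
open MeasureTheory Real Set Filter

lemma aux_sin_lower (z : ℂ) (hz : ‖z‖ ≤ 1 / 2) : 2 * ‖z‖ ≤ ‖Complex.sin (π * z)‖ := by
  have hpi := Real.pi_pos
  have hre : |π * z.re| ≤ π / 2 := by
    rw [abs_mul, abs_of_pos hpi]
    have := Complex.abs_re_le_norm z
    nlinarith
  have h1 := Real.mul_abs_le_abs_sin hre
  have h1' : 2 * |z.re| ≤ |Real.sin (π * z.re)| := by
    refine le_trans (le_of_eq ?_) h1
    rw [abs_mul, abs_of_pos hpi]; field_simp
  have h2 : 2 * |z.im| ≤ |Real.sinh (π * z.im)| := by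
    have : |π * z.im| ≤ Real.sinh |π * z.im| := Real.self_le_sinh_iff.2 (abs_nonneg _)
    rw [Real.abs_sinh]
    refine le_trans ?_ this
    rw [abs_mul, abs_of_pos hpi]
    have := Real.pi_gt_three
    nlinarith [abs_nonneg z.im]
  have hs : ‖Complex.sin (π * z)‖ ^ 2 = Real.sin (π * z.re) ^ 2 + Real.sinh (π * z.im) ^ 2 := by
    rw [← Complex.normSq_eq_norm_sq, Complex.sin_eq, Complex.normSq_apply]
    have e1 : (π * z : ℂ).re = π * z.re := by simp
    have e2 : (π * z : ℂ).im = π * z.im := by simp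
    rw [e1, e2]
    rw [← Complex.ofReal_sin, ← Complex.ofReal_cos, ← Complex.ofReal_cosh, ← Complex.ofReal_sinh]
    simp only [Complex.add_re, Complex.mul_re, Complex.ofReal_re, Complex.ofReal_im, Complex.I_re,
      Complex.I_im, Complex.add_im, Complex.mul_im]
    have a1 := Real.sin_sq_add_cos_sq (π * z.re)
    have a2 := Real.cosh_sq (π * z.im)
    ring_nf
    rw [a2]
    have a3 : Real.cos (π * z.re) ^ 2 = 1 - Real.sin (π * z.re) ^ 2 := by linarith
    rw [a3]; ring
  have hn : ‖z‖ ^ 2 = z.re ^ 2 + z.im ^ 2 := by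
    rw [← Complex.normSq_eq_norm_sq, Complex.normSq_apply]; ring
  have k1 : (2 * |z.re|) ^ 2 ≤ |Real.sin (π * z.re)| ^ 2 := by gcongr
  have k2 : (2 * |z.im|) ^ 2 ≤ |Real.sinh (π * z.im)| ^ 2 := by gcongr
  rw [mul_pow, sq_abs, sq_abs] at k1 k2
  refine (sq_le_sq₀ (by positivity) (norm_nonneg _)).1 ?_
  rw [mul_pow, hs, hn]; linarith

lemma aux_delta : ∃ δ : ℝ, 0 < δ ∧ δ < 1 / 2 ∧ ∀ z : ℂ, ‖z‖ ≤ δ →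
    ‖1 - Complex.cos (π * z)‖ ≤ 1 / 4 := by
  have hc : ContinuousAt (fun z : ℂ => 1 - Complex.cos (π * z)) 0 := by fun_prop
  obtain ⟨d, hd, h⟩ := Metric.continuousAt_iff.1 hc (1 / 4) (by norm_num)
  refine ⟨min (d / 2) (1 / 4), by positivity, ?_, fun z hz => ?_⟩
  · exact lt_of_le_of_lt (min_le_right _ _) (by norm_num)
  · have h1 : ‖z‖ < d := by
      have := hz.trans (min_le_left _ _); linarith
    have := h (x := z) (by simpa using h1)
    simp only [mul_zero, Complex.cos_zero, sub_self, dist_zero_right] at this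
    exact this.le

/-- Local existence and uniqueness of the zero. -/
lemma aux_solve (δ : ℝ) (hδ : 0 < δ) (hδ2 : δ < 1 / 2)
    (hcos : ∀ z : ℂ, ‖z‖ ≤ δ → ‖1 - Complex.cos (π * z)‖ ≤ 1 / 4)
    (g : ℂ → ℂ) (hg : Differentiable ℂ g) (c : ℂ) (hc : c * c = 1) (ε : ℝ)
    (hε1 : ε ≤ δ) (hε2 : ε ≤ 1 / 4) (hb : ∀ z : ℂ, ‖z‖ ≤ 1 → ‖g z‖ ≤ ε) :
    (∃ z : ℂ, ‖z‖ < 1 / 2 ∧ c * Complex.sin (π * z) + g z = 0 ∧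
      ∀ w : ℂ, ‖w‖ < 1 / 2 → c * Complex.sin (π * w) + g w = 0 → w = z) ∧
    ∀ w : ℂ, ‖w‖ < 1 / 2 → c * Complex.sin (π * w) + g w = 0 → ‖w‖ ≤ ε := by
  have hpi := Real.pi_gt_three
  have hpi0 : (π : ℂ) ≠ 0 := by exact_mod_cast Real.pi_ne_zero
  have hcn : ‖c‖ = 1 := by
    have h : ‖c‖ * ‖c‖ = 1 := by rw [← norm_mul, hc, norm_one]
    nlinarith [norm_nonneg c]
  have hsmall : ∀ w : ℂ, ‖w‖ < 1 / 2 → c * Complex.sin (π * w) + g w = 0 → ‖w‖ ≤ ε := by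
    intro w hw h0
    have h1 : c * Complex.sin (π * w) = - g w := by linear_combination h0
    have h2 : ‖Complex.sin (π * w)‖ = ‖g w‖ := by
      rw [← norm_neg (g w), ← h1, norm_mul, hcn, one_mul]
    have h3 := aux_sin_lower w hw.le
    have h4 := hb w (by linarith)
    linarith [norm_nonneg w]
  refine ⟨?_, hsmall⟩
  set T : ℂ → ℂ := fun z => z - (Complex.sin (π * z) + c * g z) / π with hT
  have hTfix : ∀ z, T z = z ↔ c * Complex.sin (π * z) + g z = 0 := by
    intro z
    simp only [hT, sub_eq_self, div_eq_zero_iff, hpi0, or_false]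
    constructor
    · intro h; linear_combination c * h - g z * hc
    · intro h; linear_combination c * h - Complex.sin (π * z) * hc
  have hTd : ∀ z, HasDerivAt T (1 - Complex.cos (π * z) - c * deriv g z / π) z := by
    intro z
    have h1 : HasDerivAt (fun z : ℂ => Complex.sin (π * z)) (Complex.cos (π * z) * (π * 1)) z :=
      ((hasDerivAt_id z).const_mul (π : ℂ)).csin
    have h2 := (hasDerivAt_id z).sub ((h1.add ((hg z).hasDerivAt.const_mul c)).div_const (π : ℂ))
    refine HasDerivAt.congr_deriv (f := T) h2 ?_
    field_simp
    ring
  have hgd : ∀ z : ℂ, ‖z‖ ≤ δ → ‖deriv g z‖ ≤ 1 / 2 := by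
    intro z hz
    have := Complex.norm_deriv_le_of_forall_mem_sphere_norm_le (c := z) (R := 1 / 2) (C := 1 / 4)
      (f := g) (by norm_num) hg.diffContOnCl ?_
    · norm_num at this ⊢; exact this
    · intro w hw
      refine (hb w ?_).trans hε2
      have h1 : ‖w - z‖ = 1 / 2 := by simpa using hw
      have h2 : ‖w‖ ≤ ‖w - z‖ + ‖z‖ := by simpa using norm_add_le (w - z) z
      linarith
  have hTd' : ∀ z ∈ Metric.closedBall (0 : ℂ) δ, ‖deriv T z‖ ≤ 1 / 2 := by
    intro z hz
    have hz : ‖z‖ ≤ δ := by simpa using hz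
    rw [(hTd z).deriv]
    refine (norm_sub_le _ _).trans ?_
    have h1 := hcos z hz
    have h2 : ‖c * deriv g z / π‖ ≤ 1 / 4 := by
      rw [norm_div, norm_mul, hcn, one_mul, Complex.norm_real, Real.norm_of_nonneg (by linarith),
        div_le_iff₀ (by linarith)]
      have := hgd z hz
      linarith
    linarith
  have hlip : ∀ x ∈ Metric.closedBall (0 : ℂ) δ, ∀ y ∈ Metric.closedBall (0 : ℂ) δ,
      ‖T y - T x‖ ≤ 1 / 2 * ‖y - x‖ := fun x hx y hy =>
    Convex.norm_image_sub_le_of_norm_deriv_le (fun z _ => (hTd z).differentiableAt) hTd'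
      (convex_closedBall _ _) hx hy
  have h0mem : (0 : ℂ) ∈ Metric.closedBall (0 : ℂ) δ := by simp [hδ.le]
  have hT0 : ‖T 0‖ ≤ δ / 2 := by
    simp only [hT, mul_zero, Complex.sin_zero, zero_add, zero_sub, norm_neg]
    rw [norm_div, norm_mul, hcn, one_mul, Complex.norm_real, Real.norm_of_nonneg (by linarith),
        div_le_iff₀ (by linarith)]
    have := hb 0 (by simp)
    nlinarith
  have hmaps : MapsTo T (Metric.closedBall (0 : ℂ) δ) (Metric.closedBall (0 : ℂ) δ) := by
    intro z hz
    have h1 := hlip 0 h0mem z hz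
    have hz' : ‖z‖ ≤ δ := by simpa using hz
    have h2 : ‖T z‖ ≤ ‖T z - T 0‖ + ‖T 0‖ := by simpa using norm_add_le (T z - T 0) (T 0)
    rw [sub_zero] at h1
    simp only [Metric.mem_closedBall, dist_zero_right]
    linarith
  have hcontr : ContractingWith (1 / 2) (hmaps.restrict T _ _) := by
    refine ⟨?_, LipschitzWith.of_dist_le_mul ?_⟩
    · rw [← NNReal.coe_lt_coe]; norm_num
    · rintro ⟨x, hx⟩ ⟨y, hy⟩
      simp only [Subtype.dist_eq, MapsTo.val_restrict_apply, dist_eq_norm]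
      simpa using hlip y hy x hx
  obtain ⟨z, hz, hfix, -⟩ := ContractingWith.exists_fixedPoint'
    Metric.isClosed_closedBall.isComplete hmaps hcontr h0mem (edist_ne_top _ _)
  have hzn : ‖z‖ ≤ δ := by simpa using hz
  refine ⟨z, by linarith, (hTfix z).1 hfix, fun w hw hw0 => ?_⟩
  have hwm : w ∈ Metric.closedBall (0 : ℂ) δ := by
    simpa using (hsmall w hw hw0).trans hε1
  have h1 := hlip z hz w hwm
  rw [(hTfix w).2 hw0, show T z = z from hfix] at h1
  have : ‖w - z‖ = 0 := by linarith [norm_nonneg (w - z)]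
  exact sub_eq_zero.1 (norm_eq_zero.1 this)

/-- Uniform smallness from pointwise decay plus boundedness in a strip. -/
lemma aux_uniform (r : ℂ → ℂ) (hr : Differentiable ℂ r) (C : ℝ)
    (hC : ∀ z : ℂ, |z.im| ≤ 2 → ‖r z‖ ≤ C)
    (hlim : ∀ z : ℂ, Tendsto (fun n : ℤ => r (n + z)) cofinite (nhds 0)) (ε : ℝ) (hε : 0 < ε) :
    ∀ᶠ n : ℤ in cofinite, ∀ z : ℂ, ‖z‖ ≤ 1 → ‖r (n + z)‖ ≤ ε := by
  have hC0 : 0 ≤ C := (norm_nonneg _).trans (hC 0 (by simp))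
  have hd : ∀ z : ℂ, |z.im| ≤ 1 → ‖deriv r z‖ ≤ C := by
    intro z hz
    have := Complex.norm_deriv_le_of_forall_mem_sphere_norm_le (c := z) (R := 1) (C := C)
      (f := r) (by norm_num) hr.diffContOnCl ?_
    · simpa using this
    · intro w hw
      apply hC
      have h1 : ‖w - z‖ = 1 := by simpa using hw
      have h2 := Complex.abs_im_le_norm (w - z)
      have h3 : |w.im| ≤ |(w - z).im| + |z.im| := by simpa using abs_add_le (w - z).im z.im
      linarith
  have hlip : ∀ (n : ℤ) (x y : ℂ), ‖x‖ ≤ 1 → ‖y‖ ≤ 1 → ‖r (n + y) - r (n + x)‖ ≤ C * ‖y - x‖ := by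
    intro n x y hx hy
    have key := Convex.norm_image_sub_le_of_norm_deriv_le (𝕜 := ℂ) (f := r)
      (s := Metric.closedBall (n : ℂ) 1) (x := n + x) (y := n + y) (C := C)
      (fun z _ => hr z) ?_ (convex_closedBall _ _) (by simpa [dist_eq_norm] using hx)
      (by simpa [dist_eq_norm] using hy)
    · simpa using key
    · intro z hz
      apply hd
      have h1 := Complex.abs_im_le_norm (z - n)
      have h2 : ‖z - n‖ ≤ 1 := by simpa [dist_eq_norm] using hz
      simp only [Complex.sub_im, Complex.intCast_im, sub_zero] at h1
      linarith
  obtain ⟨η, hη, hηC⟩ : ∃ η : ℝ, 0 < η ∧ C * η ≤ ε / 2 := by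
    refine ⟨ε / (2 * (C + 1)), by positivity, ?_⟩
    rw [mul_div_assoc', div_le_div_iff₀ (by positivity) (by norm_num)]
    nlinarith
  obtain ⟨t, hts, htf, htc⟩ := (isCompact_closedBall (0 : ℂ) 1).finite_cover_balls hη
  have hev : ∀ᶠ n : ℤ in cofinite, ∀ x ∈ t, ‖r (n + x)‖ < ε / 2 := by
    rw [Filter.eventually_all_finite htf]
    intro x _
    have := (Metric.tendsto_nhds.1 (hlim x)) (ε / 2) (by linarith)
    simpa using this
  filter_upwards [hev] with n hn z hz
  have hz' : z ∈ Metric.closedBall (0 : ℂ) 1 := by simpa using hz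
  obtain ⟨x, hx, hzx⟩ := mem_iUnion₂.1 (htc hz')
  have hzx' : ‖z - x‖ < η := by simpa [dist_eq_norm] using hzx
  have hx1 : ‖x‖ ≤ 1 := by simpa using hts hx
  have h1 := hlip n x z hx1 hz
  have h2 := hn x hx
  have h3 : ‖r (n + z)‖ ≤ ‖r (n + z) - r (n + x)‖ + ‖r (n + x)‖ := by
    simpa using norm_add_le (r (n + z) - r (n + x)) (r (n + x))
  have h4 : C * ‖z - x‖ ≤ C * η := by gcongr
  linarith

noncomputable def auxE (a b : ℝ) (F : ℝ → ℂ) (lam : ℂ) : ℂ :=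
  ∫ x in Ioc a b, F x * Complex.exp (lam * ((π - 2 * x : ℝ) : ℂ) * Complex.I)

lemma aux_exp_bound (x : ℝ) (hx0 : 0 ≤ x) (hx1 : x ≤ π) (lam : ℂ) (M : ℝ) (hM : |lam.im| ≤ M) :
    ‖Complex.exp (lam * ((π - 2 * x : ℝ) : ℂ) * Complex.I)‖ ≤ Real.exp (M * π) := by
  rw [Complex.norm_exp]
  apply Real.exp_le_exp.2
  have e : (lam * ((π - 2 * x : ℝ) : ℂ) * Complex.I).re = - (lam.im * (π - 2 * x)) := by
    rw [Complex.mul_I_re, Complex.im_mul_ofReal]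
  rw [e]
  refine (neg_le_abs _).trans ?_
  rw [abs_mul]
  have : |π - 2 * x| ≤ π := abs_le.2 ⟨by linarith, by linarith⟩
  gcongr
  exact (abs_nonneg _).trans hM

lemma auxE_bound (a b : ℝ) (ha : 0 ≤ a) (hb : b ≤ π) (F : ℝ → ℂ)
    (hF : Integrable F (volume.restrict (Ioc a b))) (lam : ℂ) (hl : |lam.im| ≤ 2) :
    ‖auxE a b F lam‖ ≤ ∫ x in Ioc a b, ‖F x‖ * Real.exp (2 * π) := by
  refine norm_integral_le_of_norm_le (hF.norm.mul_const _) ?_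
  filter_upwards [ae_restrict_mem measurableSet_Ioc] with x hx
  rw [norm_mul]
  gcongr
  exact aux_exp_bound x (ha.trans hx.1.le) (hx.2.trans hb) lam 2 hl

lemma auxE_integrable (a b : ℝ) (ha : 0 ≤ a) (hb : b ≤ π) (F : ℝ → ℂ)
    (hF : Integrable F (volume.restrict (Ioc a b))) (lam : ℂ) :
    Integrable (fun x => F x * Complex.exp (lam * ((π - 2 * x : ℝ) : ℂ) * Complex.I))
      (volume.restrict (Ioc a b)) := by
  refine Integrable.mono' (hF.norm.mul_const (Real.exp (|lam.im| * π))) ?_ ?_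
  · exact hF.aestronglyMeasurable.mul (Continuous.aestronglyMeasurable (by fun_prop))
  · filter_upwards [ae_restrict_mem measurableSet_Ioc] with x hx
    rw [norm_mul]
    gcongr
    exact aux_exp_bound x (ha.trans hx.1.le) (hx.2.trans hb) lam _ le_rfl

lemma auxE_diff (a b : ℝ) (ha : 0 ≤ a) (hb : b ≤ π) (F : ℝ → ℂ)
    (hF : Integrable F (volume.restrict (Ioc a b))) : Differentiable ℂ (auxE a b F) := by
  intro lam
  refine (hasDerivAt_integral_of_dominated_loc_of_deriv_le
    (bound := fun x => ‖F x‖ * (Real.exp ((|lam.im| + 1) * π) * π))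
    (F := fun (l : ℂ) (x : ℝ) => F x * Complex.exp (l * ((π - 2 * x : ℝ) : ℂ) * Complex.I))
    (F' := fun (l : ℂ) (x : ℝ) => F x * (Complex.exp (l * ((π - 2 * x : ℝ) : ℂ) * Complex.I) *
      (((π - 2 * x : ℝ) : ℂ) * Complex.I)))
    (Metric.ball_mem_nhds lam one_pos) ?_ ?_ ?_ ?_ ?_ ?_).2.differentiableAt
  · exact .of_forall fun l => (auxE_integrable a b ha hb F hF l).aestronglyMeasurable
  · exact auxE_integrable a b ha hb F hF lam
  · exact hF.aestronglyMeasurable.mul (Continuous.aestronglyMeasurable (by fun_prop))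
  · filter_upwards [ae_restrict_mem measurableSet_Ioc] with x hx l hl
    have hx0 := ha.trans hx.1.le
    have hx1 := hx.2.trans hb
    rw [norm_mul, norm_mul, norm_mul, Complex.norm_I, mul_one, Complex.norm_real, Real.norm_eq_abs]
    have h1 : |π - 2 * x| ≤ π := abs_le.2 ⟨by linarith, by linarith⟩
    have h2 : |l.im| ≤ |lam.im| + 1 := by
      have h3 : ‖l - lam‖ < 1 := by simpa [dist_eq_norm] using hl
      have h4 := Complex.abs_im_le_norm (l - lam)
      have h5 : |l.im| ≤ |(l - lam).im| + |lam.im| := by simpa using abs_add_le (l - lam).im lam.im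
      linarith
    have h6 := aux_exp_bound x hx0 hx1 l _ h2
    gcongr
  · exact hF.norm.mul_const _
  · refine .of_forall fun x l _ => ?_
    have h1 := (((hasDerivAt_id l).mul_const ((π - 2 * x : ℝ) : ℂ)).mul_const Complex.I).cexp
    simpa using h1.const_mul (F x)

lemma auxE_lim (a b : ℝ) (F : ℝ → ℂ) (z : ℂ) :
    Tendsto (fun n : ℤ => auxE a b F (n + z)) cofinite (nhds 0) := by
  set f : ℝ → ℂ := (Ioc a b).indicator
    (fun x => F x * Complex.exp (z * ((π - 2 * x : ℝ) : ℂ) * Complex.I)) with hf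
  have h1 := Real.tendsto_integral_exp_smul_cocompact f
  have h2 : Tendsto (fun n : ℤ => (n : ℝ) / π) cofinite (cocompact ℝ) := by
    have : Tendsto (fun x : ℝ => x / π) (cocompact ℝ) (cocompact ℝ) :=
      (Homeomorph.mulRight₀ (π⁻¹) (inv_ne_zero Real.pi_ne_zero)).isClosedEmbedding.tendsto_cocompact
    exact this.comp Int.tendsto_coe_cofinite
  have h3 := (h1.comp h2).norm
  rw [norm_zero] at h3
  rw [tendsto_zero_iff_norm_tendsto_zero]
  refine h3.congr fun n => ?_
  have hpi0 : (π : ℂ) ≠ 0 := by exact_mod_cast Real.pi_ne_zero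
  have e : auxE a b F (n + z) = Complex.exp (n * π * Complex.I) *
      ∫ v : ℝ, Real.fourierChar (-(v * ((n : ℝ) / π))) • f v := by
    rw [auxE, ← integral_const_mul, ← integral_indicator measurableSet_Ioc]
    congr 1
    ext x
    by_cases hx : x ∈ Ioc a b
    · simp only [hf, indicator_of_mem hx, Circle.smul_def, Real.fourierChar_apply, smul_eq_mul]
      rw [mul_left_comm (Complex.exp (_ * Complex.I)) (F x), mul_left_comm _ (F x),
        ← Complex.exp_add, ← Complex.exp_add]
      congr 2
      push_cast
      field_simp
      ring
    · simp [hf, indicator_of_notMem hx]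
  rw [e, norm_mul]
  have : ‖Complex.exp (n * π * Complex.I)‖ = 1 := by
    have := Complex.norm_exp_ofReal_mul_I ((n : ℝ) * π)
    simpa using this
  rw [this, one_mul]
  rfl

lemma aux_integrable (a₁ : ℝ) (ha₁ : 0 < a₁) (K : ℝ → ℂ)
    (hK : MemLp K 2 (volume.restrict (Ioo 0 π))) :
    Integrable K (volume.restrict (Ioc (a₁ / 2) (π - a₁ / 2))) := by
  have h1 : Integrable K (volume.restrict (Ioo 0 π)) := hK.integrable (by norm_num)
  refine h1.mono_measure (Measure.restrict_mono ?_ le_rfl)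
  intro x hx
  exact ⟨by linarith [hx.1], by linarith [hx.2]⟩

lemma aux_Delta (a₁ : ℝ) (ha₁ : 0 < a₁) (ha₁' : a₁ < π)
    (K G : ℝ → ℂ)
    (hK : MemLp K 2 (volume.restrict (Ioo 0 π)))
    (hG : MemLp G 2 (volume.restrict (Ioo 0 π))) (lam : ℂ) :
    Delta1 a₁ K G lam = Complex.sin (π * lam) +
      (auxE (a₁ / 2) (π - a₁ / 2) (fun x => K x / 2 + G x * Complex.I / 2) lam +
       auxE (a₁ / 2) (π - a₁ / 2) (fun x => K x / 2 - G x * Complex.I / 2) (-lam)) := by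
  have hK1 := aux_integrable a₁ ha₁ K hK
  have hG1 := aux_integrable a₁ ha₁ G hG
  have hle : a₁ / 2 ≤ π - a₁ / 2 := by linarith
  have ha : 0 ≤ a₁ / 2 := by linarith
  have hb : π - a₁ / 2 ≤ π := by linarith
  have iK := fun l => auxE_integrable _ _ ha hb K hK1 l
  have iG := fun l => auxE_integrable _ _ ha hb G hG1 l
  have eK : (∫ x in (a₁ / 2)..(π - a₁ / 2), K x * Complex.cos (lam * ((π - 2 * x : ℝ) : ℂ))) =
      1 / 2 * auxE (a₁ / 2) (π - a₁ / 2) K lam + 1 / 2 * auxE (a₁ / 2) (π - a₁ / 2) K (-lam) := by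
    rw [intervalIntegral.integral_of_le hle, auxE, auxE, ← integral_const_mul,
      ← integral_const_mul, ← integral_add ((iK _).const_mul _) ((iK _).const_mul _)]
    congr 1
    ext x
    rw [Complex.cos, neg_mul]
    ring
  have eG : (∫ x in (a₁ / 2)..(π - a₁ / 2), G x * Complex.sin (lam * ((π - 2 * x : ℝ) : ℂ))) =
      (-Complex.I / 2) * auxE (a₁ / 2) (π - a₁ / 2) G lam +
        (Complex.I / 2) * auxE (a₁ / 2) (π - a₁ / 2) G (-lam) := by
    rw [intervalIntegral.integral_of_le hle, auxE, auxE, ← integral_const_mul,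
      ← integral_const_mul, ← integral_add ((iG _).const_mul _) ((iG _).const_mul _)]
    congr 1
    ext x
    rw [Complex.sin, neg_mul]
    ring
  have eA : ∀ (s : ℂ) (l : ℂ), auxE (a₁ / 2) (π - a₁ / 2) (fun x => K x / 2 + G x * s) l =
      1 / 2 * auxE (a₁ / 2) (π - a₁ / 2) K l + s * auxE (a₁ / 2) (π - a₁ / 2) G l := by
    intro s l
    rw [auxE, auxE, auxE, ← integral_const_mul,
      ← integral_const_mul, ← integral_add ((iK _).const_mul _) ((iG _).const_mul _)]
    congr 1
    ext x
    ring
  have e1 := eA (Complex.I / 2) lam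
  have e2 := eA (-Complex.I / 2) (-lam)
  have f1 : (fun x => K x / 2 + G x * (Complex.I / 2)) =
    fun x => K x / 2 + G x * Complex.I / 2 := by ext x; ring
  have f2 : (fun x => K x / 2 + G x * (-Complex.I / 2)) =
    fun x => K x / 2 - G x * Complex.I / 2 := by ext x; ring
  rw [f1] at e1
  rw [f2] at e2
  rw [e1, e2, Delta1, eK, eG]
  ring

/-- The entire function `Δ₁` has infinitely many zeros accumulating near the integers:
there are `N ∈ ℕ` and complex numbers `λ_n` (`|n| ≥ N`) such that `λ_n` is the unique
zero of `Δ₁` in the disk `{|λ − n| < 1/2}`, and `λ_n = n + κ_n` with `κ_n → 0`. -/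
theorem Delta1_eigenvalue_asymptotics (a₁ : ℝ) (ha₁ : 0 < a₁) (ha₁' : a₁ < π)
    (K G : ℝ → ℂ)
    (hK : MemLp K 2 (volume.restrict (Ioo 0 π)))
    (hG : MemLp G 2 (volume.restrict (Ioo 0 π)))
    (hK0 : ∀ᵐ x ∂(volume : Measure ℝ), x ∉ Ioo (a₁ / 2) (π - a₁ / 2) → K x = 0)
    (hG0 : ∀ᵐ x ∂(volume : Measure ℝ), x ∉ Ioo (a₁ / 2) (π - a₁ / 2) → G x = 0) :
    ∃ (N : ℕ) (lam : ℤ → ℂ),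
      (∀ n : ℤ, (N : ℤ) ≤ |n| →
        Delta1 a₁ K G (lam n) = 0 ∧ ‖lam n - (n : ℂ)‖ < 1 / 2 ∧
        ∀ μ : ℂ, ‖μ - (n : ℂ)‖ < 1 / 2 → Delta1 a₁ K G μ = 0 → μ = lam n) ∧
      Tendsto (fun n : ℤ => lam n - (n : ℂ)) cofinite (nhds 0) := by
  classical
  have hK1 := aux_integrable a₁ ha₁ K hK
  have hG1 := aux_integrable a₁ ha₁ G hG
  have ha : 0 ≤ a₁ / 2 := by linarith
  have hb : π - a₁ / 2 ≤ π := by linarith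
  set A : ℝ → ℂ := fun x => K x / 2 + G x * Complex.I / 2 with hA
  set B : ℝ → ℂ := fun x => K x / 2 - G x * Complex.I / 2 with hB
  have iA : Integrable A (volume.restrict (Ioc (a₁ / 2) (π - a₁ / 2))) :=
    (hK1.div_const _).add ((hG1.mul_const _).div_const _)
  have iB : Integrable B (volume.restrict (Ioc (a₁ / 2) (π - a₁ / 2))) :=
    (hK1.div_const _).sub ((hG1.mul_const _).div_const _)
  set r : ℂ → ℂ := fun l => auxE (a₁ / 2) (π - a₁ / 2) A l + auxE (a₁ / 2) (π - a₁ / 2) B (-l)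
    with hr
  have hD : ∀ l, Delta1 a₁ K G l = Complex.sin (π * l) + r l :=
    fun l => aux_Delta a₁ ha₁ ha₁' K G hK hG l
  have hrd : Differentiable ℂ r :=
    (auxE_diff _ _ ha hb A iA).add ((auxE_diff _ _ ha hb B iB).comp differentiable_neg)
  have hrlim : ∀ z : ℂ, Tendsto (fun n : ℤ => r (n + z)) cofinite (nhds 0) := by
    intro z
    have h1 := auxE_lim (a₁ / 2) (π - a₁ / 2) A z
    have h2 := (auxE_lim (a₁ / 2) (π - a₁ / 2) B (-z)).comp
      (neg_injective (G := ℤ)).tendsto_cofinite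
    have h3 := h1.add h2
    rw [add_zero] at h3
    refine h3.congr fun n => ?_
    simp only [hr, Function.comp, Int.cast_neg, neg_add]
  have hunif := aux_uniform r hrd _ (fun z hz => (norm_add_le _ _).trans
    (add_le_add (auxE_bound _ _ ha hb A iA z hz)
      (auxE_bound _ _ ha hb B iB (-z) (by simpa using hz)))) hrlim
  obtain ⟨δ, hδ, hδ2, hcos⟩ := aux_delta
  have hshift : ∀ (n : ℤ) (z : ℂ), Delta1 a₁ K G (n + z) =
      Complex.cos (n * π) * Complex.sin (π * z) + r (n + z) := by
    intro n z
    rw [hD, show (π : ℂ) * (n + z) = n * π + π * z by ring, Complex.sin_add,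
      Complex.sin_int_mul_pi]
    ring
  have hcc : ∀ n : ℤ, Complex.cos (n * π) * Complex.cos (n * π) = 1 := by
    intro n
    have := Complex.sin_sq_add_cos_sq (n * π)
    rw [Complex.sin_int_mul_pi] at this
    linear_combination this
  have main : ∀ ε : ℝ, 0 < ε → ε ≤ δ → ε ≤ 1 / 4 → ∀ᶠ n : ℤ in cofinite,
      (∃ z : ℂ, ‖z‖ < 1 / 2 ∧ Delta1 a₁ K G (n + z) = 0 ∧
        ∀ w : ℂ, ‖w‖ < 1 / 2 → Delta1 a₁ K G (n + w) = 0 → w = z) ∧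
      ∀ w : ℂ, ‖w‖ < 1 / 2 → Delta1 a₁ K G (n + w) = 0 → ‖w‖ ≤ ε := by
    intro ε h0 h1 h2
    filter_upwards [hunif ε h0] with n hn
    simp only [hshift]
    exact aux_solve δ hδ hδ2 hcos (fun z => r (n + z))
      (hrd.comp (differentiable_id.const_add (n : ℂ))) _ (hcc n) ε h1 h2 hn
  have hex : ∀ᶠ n : ℤ in cofinite, ∃ z : ℂ, ‖z‖ < 1 / 2 ∧ Delta1 a₁ K G (n + z) = 0 ∧
        ∀ w : ℂ, ‖w‖ < 1 / 2 → Delta1 a₁ K G (n + w) = 0 → w = z := by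
    filter_upwards [main (min δ (1 / 4)) (by positivity) (min_le_left _ _) (min_le_right _ _)]
      with n hn using hn.1
  set κ : ℤ → ℂ := fun n => if h : ∃ z : ℂ, ‖z‖ < 1 / 2 ∧ Delta1 a₁ K G (n + z) = 0 ∧
        ∀ w : ℂ, ‖w‖ < 1 / 2 → Delta1 a₁ K G (n + w) = 0 → w = z then h.choose else 0 with hκ
  have hκs : ∀ n : ℤ, (∃ z : ℂ, ‖z‖ < 1 / 2 ∧ Delta1 a₁ K G (n + z) = 0 ∧
        ∀ w : ℂ, ‖w‖ < 1 / 2 → Delta1 a₁ K G (n + w) = 0 → w = z) →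
      ‖κ n‖ < 1 / 2 ∧ Delta1 a₁ K G (n + κ n) = 0 ∧
        ∀ w : ℂ, ‖w‖ < 1 / 2 → Delta1 a₁ K G (n + w) = 0 → w = κ n := by
    intro n h
    have : κ n = h.choose := by simp only [hκ, dif_pos h]
    rw [this]
    exact h.choose_spec
  obtain ⟨N, hN⟩ : ∃ N : ℕ, ∀ n : ℤ, (N : ℤ) ≤ |n| → ∃ z : ℂ, ‖z‖ < 1 / 2 ∧
      Delta1 a₁ K G (n + z) = 0 ∧
        ∀ w : ℂ, ‖w‖ < 1 / 2 → Delta1 a₁ K G (n + w) = 0 → w = z := by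
    rw [Int.cofinite_eq, eventually_sup, eventually_atBot, eventually_atTop] at hex
    obtain ⟨⟨p, hp⟩, q, hq⟩ := hex
    refine ⟨p.natAbs + q.natAbs, fun n hn => ?_⟩
    rcases le_total 0 n with h | h
    · exact hq n (by rw [abs_of_nonneg h] at hn; omega)
    · exact hp n (by rw [abs_of_nonpos h] at hn; omega)
  refine ⟨N, fun n => n + κ n, fun n hn => ?_, ?_⟩
  · obtain ⟨h1, h2, h3⟩ := hκs n (hN n hn)
    refine ⟨h2, by simpa using h1, fun μ hμ hμ0 => ?_⟩
    have := h3 (μ - n) hμ (by simpa using hμ0)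
    simp only [← this]; ring
  · simp only [add_sub_cancel_left]
    rw [Metric.tendsto_nhds]
    intro ε hε
    filter_upwards [hex, main (min (ε / 2) (min δ (1 / 4))) (by positivity)
      ((min_le_right _ _).trans (min_le_left _ _))
      ((min_le_right _ _).trans (min_le_right _ _))] with n h1 h2
    obtain ⟨k1, k2, k3⟩ := hκs n h1
    have := (h2.2 _ k1 k2).trans (min_le_left _ _)
    rw [dist_zero_right]
    linarith
end

section
/- The entire function Δ₂ has infinitely many zeros accumulating near the half-integers: there exist N ∈ ℕ and a sequence (λ_n)_{n ∈ ℤ, |n| ≥ N} of complex numbers such that for every n with |n| ≥ N, λ_n is the unique zero of Δ₂ in the disk {λ ∈ ℂ : |λ − (n − 1/2)| < 1/2}, and λ_n = n − 1/2 + κ_n with κ_n → 0 as |n| → ∞. -/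
open MeasureTheory Real Set Filter

/-- Building block: an exponential integral with complex frequency. -/
noncomputable def HInt (a b : ℝ) (g : ℝ → ℂ) (l : ℂ) : ℂ :=
  ∫ x in a..b, g x * Complex.exp (Complex.I * l * ((π - 2 * x : ℝ) : ℂ))

lemma HInt_exp_cont (l : ℂ) :
    Continuous (fun x : ℝ => Complex.exp (Complex.I * l * ((π - 2 * x : ℝ) : ℂ))) := by
  fun_prop

lemma HInt_integrable {a b : ℝ} {g : ℝ → ℂ} (hg : IntervalIntegrable g volume a b) (l : ℂ) :
    IntervalIntegrable (fun x => g x * Complex.exp (Complex.I * l * ((π - 2 * x : ℝ) : ℂ)))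
      volume a b :=
  hg.mul_continuousOn (HInt_exp_cont l).continuousOn

lemma HInt_tendsto {a b : ℝ} (hab : a ≤ b) (g : ℝ → ℂ) (z : ℂ) :
    Tendsto (fun m : ℝ => HInt a b g (m + z)) (cocompact ℝ) (nhds 0) := by
  have h1 := Real.tendsto_integral_exp_smul_cocompact
    (Set.indicator (Set.Ioc a b)
      (fun x => g x * Complex.exp (Complex.I * z * ((π - 2 * x : ℝ) : ℂ))))
  have hT : Tendsto (fun m : ℝ => m * π⁻¹) (cocompact ℝ) (cocompact ℝ) :=
    (Homeomorph.mulRight₀ π⁻¹ (inv_ne_zero Real.pi_ne_zero)).isClosedEmbedding.tendsto_cocompact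
  have h2 := h1.comp hT
  rw [tendsto_zero_iff_norm_tendsto_zero] at h2 ⊢
  refine h2.congr fun m => ?_
  simp only [Function.comp]
  have h3 : HInt a b g (m + z) = Complex.exp ((m * π : ℝ) * Complex.I) *
      ∫ v : ℝ, (Real.fourierChar (-(v * (m * π⁻¹)))) • (Set.indicator (Set.Ioc a b)
      (fun x => g x * Complex.exp (Complex.I * z * ((π - 2 * x : ℝ) : ℂ))) v) := by
    rw [← integral_const_mul, HInt, intervalIntegral.integral_of_le hab,
      ← integral_indicator measurableSet_Ioc]
    congr 1
    ext x
    by_cases hx : x ∈ Set.Ioc a b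
    · simp only [Set.indicator_of_mem hx, Circle.smul_def, Real.fourierChar_apply, smul_eq_mul]
      have : Complex.exp (Complex.I * (m + z) * ((π - 2 * x : ℝ) : ℂ)) =
          Complex.exp ((m * π : ℝ) * Complex.I) *
          (Complex.exp (((2 * π * (-(x * (m * π⁻¹))) : ℝ) : ℂ) * Complex.I) *
            Complex.exp (Complex.I * z * ((π - 2 * x : ℝ) : ℂ))) := by
        rw [← Complex.exp_add, ← Complex.exp_add]
        congr 1
        have hp : (π : ℂ) ≠ 0 := by exact_mod_cast Real.pi_ne_zero
        push_cast
        field_simp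
        ring
      rw [this]
      ring
    · simp [Set.indicator_of_notMem hx]
  rw [h3, norm_mul, Complex.norm_exp_ofReal_mul_I, one_mul]

lemma HInt_exp_bound {a b : ℝ} (l : ℂ) (R : ℝ) (hl : |l.im| ≤ R) (x : ℝ)
    (hx : x ∈ Set.uIoc a b) :
    ‖Complex.exp (Complex.I * l * ((π - 2 * x : ℝ) : ℂ))‖ ≤ 
      Real.exp (R * (π + 2 * (|a| + |b|))) := by
  rw [Complex.norm_exp]
  apply Real.exp_le_exp.mpr
  have : (Complex.I * l * ((π - 2 * x : ℝ) : ℂ)).re = - (l.im * (π - 2 * x)) := by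
    rw [Complex.re_mul_ofReal]; simp
  rw [this]
  refine (neg_le_abs _).trans ?_
  rw [abs_mul]
  have hx' : |x| ≤ |a| + |b| := by
    rcases Set.mem_uIoc.mp hx with h | h <;> rw [abs_le] <;> constructor <;>
      linarith [neg_abs_le a, le_abs_self a, neg_abs_le b, le_abs_self b, abs_nonneg a, abs_nonneg b]
  have : |π - 2 * x| ≤ π + 2 * (|a| + |b|) := by
    rw [abs_le] at *
    constructor <;> linarith [Real.pi_pos]
  exact mul_le_mul hl this (abs_nonneg _) ((abs_nonneg _).trans hl)

lemma HInt_hasDerivAt {a b : ℝ} {g : ℝ → ℂ} (hg : IntervalIntegrable g volume a b) (l : ℂ) :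
    HasDerivAt (HInt a b g)
      (HInt a b (fun x => g x * (Complex.I * ((π - 2 * x : ℝ) : ℂ))) l) l := by
  have hg' : IntervalIntegrable (fun x => g x * (Complex.I * ((π - 2 * x : ℝ) : ℂ))) volume a b :=
    hg.mul_continuousOn (by fun_prop)
  have key := intervalIntegral.hasDerivAt_integral_of_dominated_loc_of_deriv_le
    (μ := volume) (a := a) (b := b) (𝕜 := ℂ)
    (F := fun l x => g x * Complex.exp (Complex.I * l * ((π - 2 * x : ℝ) : ℂ)))
    (F' := fun l x => g x * (Complex.I * ((π - 2 * x : ℝ) : ℂ)) *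
      Complex.exp (Complex.I * l * ((π - 2 * x : ℝ) : ℂ)))
    (x₀ := l) (s := Metric.ball l 1)
    (bound := fun x => ‖g x * (Complex.I * ((π - 2 * x : ℝ) : ℂ))‖ *
      Real.exp ((|l.im| + 1) * (π + 2 * (|a| + |b|))))
    (Metric.ball_mem_nhds l one_pos)
    (Filter.Eventually.of_forall fun y => (HInt_integrable hg y).aestronglyMeasurable_restrict_uIoc)
    (HInt_integrable hg l)
    (HInt_integrable hg' l).aestronglyMeasurable_restrict_uIoc
    (Filter.Eventually.of_forall fun x hx y hy => ?_)
    (hg'.norm.mul_const _)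
    (Filter.Eventually.of_forall fun x hx y hy => ?_)
  · exact key.2
  · rw [norm_mul]
    refine mul_le_mul_of_nonneg_left (HInt_exp_bound y _ ?_ x hx) (norm_nonneg _)
    have h1 : |(y - l).im| ≤ ‖y - l‖ := Complex.abs_im_le_norm _
    rw [Metric.mem_ball, dist_eq_norm] at hy
    rw [Complex.sub_im] at h1
    have := abs_sub_abs_le_abs_sub y.im l.im
    linarith
  · have h1 : HasDerivAt (fun y : ℂ => Complex.I * y * ((π - 2 * x : ℝ) : ℂ))
        (Complex.I * 1 * ((π - 2 * x : ℝ) : ℂ)) y :=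
      ((hasDerivAt_id y).const_mul Complex.I).mul_const _
    refine (h1.cexp.const_mul (g x)).congr_deriv ?_
    ring

lemma HInt_norm_le {a b : ℝ} {g : ℝ → ℂ} (hg : IntervalIntegrable g volume a b) (R : ℝ) :
    ∃ C : ℝ, 0 ≤ C ∧ ∀ l : ℂ, |l.im| ≤ R → ‖HInt a b g l‖ ≤ C := by
  refine ⟨|∫ x in a..b, ‖g x‖ * Real.exp (R * (π + 2 * (|a| + |b|)))|, abs_nonneg _, fun l hl => ?_⟩
  refine intervalIntegral.norm_integral_le_abs_of_norm_le ?_ (hg.norm.mul_const _)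
  refine (ae_restrict_iff' measurableSet_uIoc).mpr (Filter.Eventually.of_forall fun x hx => ?_)
  rw [norm_mul]
  exact mul_le_mul_of_nonneg_left (HInt_exp_bound l R hl x hx) (norm_nonneg _)

/-- Riemann–Lebesgue, uniformly on the translated unit disk. -/
lemma HInt_unif {a b : ℝ} (hab : a ≤ b) {g : ℝ → ℂ} (hg : IntervalIntegrable g volume a b)
    {ε : ℝ} (hε : 0 < ε) :
    ∀ᶠ m : ℝ in cocompact ℝ, ∀ z : ℂ, ‖z‖ ≤ 1 → ‖HInt a b g (m + z)‖ < ε := by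
  have hg' : IntervalIntegrable (fun x => g x * (Complex.I * ((π - 2 * x : ℝ) : ℂ))) volume a b :=
    hg.mul_continuousOn (by fun_prop)
  obtain ⟨C, hC0, hC⟩ := HInt_norm_le hg' 1
  have hr : 0 < ε / (2 * (C + 1)) := by positivity
  obtain ⟨t, ht1, htf, htc⟩ := (isCompact_closedBall (0 : ℂ) 1).finite_cover_balls hr
  have hev : ∀ᶠ m : ℝ in cocompact ℝ, ∀ w ∈ t, ‖HInt a b g (m + w)‖ < ε / 2 := by
    rw [Filter.eventually_all_finite htf]
    intro w _
    have := (HInt_tendsto hab g w).norm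
    rw [norm_zero] at this
    exact this.eventually (gt_mem_nhds (half_pos hε))
  filter_upwards [hev] with m hm z hz
  have hz' : z ∈ Metric.closedBall (0 : ℂ) 1 := by simpa using hz
  obtain ⟨w, hw, hzw⟩ := Set.mem_iUnion₂.mp (htc hz')
  have hw1 : w ∈ Metric.closedBall (0 : ℂ) 1 := ht1 hw
  have hL : ‖HInt a b g (m + z) - HInt a b g (m + w)‖ ≤ C * ‖z - w‖ := by
    refine (convex_closedBall (0 : ℂ) 1).norm_image_sub_le_of_norm_hasDerivWithin_le
      (f := fun z => HInt a b g (m + z))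
      (f' := fun z => HInt a b (fun x => g x * (Complex.I * ((π - 2 * x : ℝ) : ℂ))) (m + z))
      (fun y hy => ?_) (fun y hy => ?_) hw1 hz'
    · exact ((HInt_hasDerivAt hg (m + y)).comp_const_add (m : ℂ) y).hasDerivWithinAt
    · apply hC
      have : ‖y‖ ≤ 1 := by simpa using hy
      simpa using (Complex.abs_im_le_norm y).trans this
  have h1 := norm_sub_norm_le (HInt a b g (m + z)) (HInt a b g (m + w))
  have h2 := hm w hw
  rw [Metric.mem_ball, dist_eq_norm] at hzw
  have h3 : C * ‖z - w‖ ≤ ε / 2 := by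
    calc C * ‖z - w‖ ≤ (C + 1) * (ε / (2 * (C + 1))) := by gcongr; linarith
      _ = ε / 2 := by field_simp
  linarith

lemma norm_sin_pi_ge (z : ℂ) (hz : ‖z‖ ≤ 1 / 2) : ‖z‖ ≤ ‖Complex.sin (π * z)‖ := by
  set x := z.re
  set y := z.im
  have hx : |x| ≤ 1 / 2 := (Complex.abs_re_le_norm z).trans hz
  have hzxy : (π : ℂ) * z = ((π * x : ℝ) : ℂ) + ((π * y : ℝ) : ℂ) * Complex.I := by
    apply Complex.ext <;> simp [x, y]
  have hs : Complex.normSq (Complex.sin (π * z)) = Real.sin (π * x) ^ 2 + Real.sinh (π * y) ^ 2 := by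
    have hsx : Complex.sin (π * z) = ((Real.sin (π * x) * Real.cosh (π * y) : ℝ) : ℂ) +
        ((Real.cos (π * x) * Real.sinh (π * y) : ℝ) : ℂ) * Complex.I := by
      rw [hzxy, Complex.sin_add, Complex.cos_mul_I, Complex.sin_mul_I]
      push_cast
      ring
    rw [hsx, Complex.normSq_add_mul_I]
    have h1 := Real.sin_sq_add_cos_sq (π * x)
    have h2 := Real.cosh_sq (π * y)
    linear_combination Real.sin (π * x) ^ 2 * h2 + Real.sinh (π * y) ^ 2 * h1
  have hsin : x ^ 2 ≤ Real.sin (π * x) ^ 2 := by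
    rw [sq_le_sq]
    have h1 := Real.mul_abs_le_abs_sin (x := π * x) (by
      rw [abs_mul, abs_of_pos Real.pi_pos]; nlinarith [Real.pi_pos])
    rw [abs_mul, abs_of_pos Real.pi_pos] at h1
    have : 2 / π * (π * |x|) = 2 * |x| := by field_simp
    linarith [abs_nonneg x]
  have hsinh : y ^ 2 ≤ Real.sinh (π * y) ^ 2 := by
    rw [sq_le_sq, Real.abs_sinh, abs_mul, abs_of_pos Real.pi_pos]
    have := Real.self_le_sinh_iff.mpr (show 0 ≤ π * |y| by positivity)
    nlinarith [Real.pi_gt_three, abs_nonneg y]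
  rw [← sq_le_sq₀ (norm_nonneg _) (norm_nonneg _), ← Complex.normSq_eq_norm_sq,
    ← Complex.normSq_eq_norm_sq, hs, Complex.normSq_apply]
  change x * x + y * y ≤ _
  nlinarith

lemma norm_one_sub_cos_le (w : ℂ) (hw : ‖w‖ ≤ 1) : ‖1 - Complex.cos w‖ ≤ 2 * ‖w‖ := by
  have h1 := Complex.norm_exp_sub_one_le (x := w * Complex.I) (by simpa using hw)
  have h2 := Complex.norm_exp_sub_one_le (x := -w * Complex.I) (by simpa using hw)
  have h3 : 1 - Complex.cos w = -((Complex.exp (w * Complex.I) - 1) +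
      (Complex.exp (-w * Complex.I) - 1)) / 2 := by
    rw [Complex.cos]; ring
  have h4 := norm_add_le (Complex.exp (w * Complex.I) - 1) (Complex.exp (-w * Complex.I) - 1)
  rw [h3, norm_div, norm_neg]
  simp at h1 h2 h4 ⊢
  linarith

lemma sin_perturb (e e' : ℂ → ℂ) (he : ∀ z, HasDerivAt e (e' z) z) (δ : ℝ) (hδ : δ ≤ 1 / 32)
    (h0 : ∀ z : ℂ, ‖z‖ ≤ 1 → ‖e z‖ ≤ δ) (h1 : ∀ z : ℂ, ‖z‖ ≤ 1 → ‖e' z‖ ≤ δ) :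
    ∃ z : ℂ, ‖z‖ ≤ δ ∧ Complex.sin (π * z) = e z ∧
      ∀ w : ℂ, ‖w‖ < 1 / 2 → Complex.sin (π * w) = e w → w = z := by
  have hp : (π : ℂ) ≠ 0 := by exact_mod_cast Real.pi_ne_zero
  have hpn : ‖(π : ℂ)‖ = π := by simp [abs_of_pos Real.pi_pos]
  have hp3 := Real.pi_gt_three
  have hp4 := Real.pi_lt_four
  have small : ∀ w : ℂ, ‖w‖ ≤ 1 / 2 → Complex.sin (π * w) = e w → ‖w‖ ≤ δ := by
    intro w hw hs
    refine (norm_sin_pi_ge w hw).trans ?_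
    rw [hs]
    exact h0 w (by linarith)
  set T : ℂ → ℂ := fun z => z - (Complex.sin (π * z) - e z) / π with hT
  have hTd : ∀ z, HasDerivAt T (1 - Complex.cos (π * z) + e' z / π) z := by
    intro z
    have hs : HasDerivAt (fun z : ℂ => Complex.sin (π * z)) (Complex.cos (π * z) * (π * 1)) z :=
      ((hasDerivAt_id z).const_mul (π : ℂ)).csin
    refine ((hasDerivAt_id z).sub ((hs.sub (he z)).div_const (π : ℂ))).congr_deriv ?_
    field_simp
    ring
  have hediv : ∀ u : ℂ, ‖u‖ ≤ δ → ‖u / π‖ ≤ 1 / 64 := by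
    intro u hu
    rw [norm_div, hpn, div_le_iff₀ Real.pi_pos]
    linarith
  have hTb : ∀ z ∈ Metric.closedBall (0 : ℂ) (1 / 32),
      ‖1 - Complex.cos (π * z) + e' z / π‖ ≤ 1 / 2 := by
    intro z hz
    have hz' : ‖z‖ ≤ 1 / 32 := by simpa using hz
    have hpz : ‖(π : ℂ) * z‖ ≤ 1 / 8 := by
      rw [norm_mul, hpn]; nlinarith [norm_nonneg z]
    have := norm_one_sub_cos_le (π * z) (by linarith)
    have h2 := hediv _ (h1 z (by linarith))
    have h3 := norm_add_le (1 - Complex.cos (π * z)) (e' z / π)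
    linarith
  have hlip : ∀ z ∈ Metric.closedBall (0 : ℂ) (1 / 32), ∀ w ∈ Metric.closedBall (0 : ℂ) (1 / 32),
      ‖T z - T w‖ ≤ 1 / 2 * ‖z - w‖ := by
    intro z hz w hw
    exact (convex_closedBall (0 : ℂ) (1 / 32)).norm_image_sub_le_of_norm_hasDerivWithin_le
      (fun y _ => (hTd y).hasDerivWithinAt) hTb hw hz
  have h0mem : (0 : ℂ) ∈ Metric.closedBall (0 : ℂ) (1 / 32) := by simp
  have hT0 : ‖T 0‖ ≤ 1 / 64 := by
    have : T 0 = e 0 / π := by simp [hT, neg_div]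
    rw [this]
    exact hediv _ (h0 0 (by simp))
  have hmaps : Set.MapsTo T (Metric.closedBall (0 : ℂ) (1 / 32)) (Metric.closedBall (0 : ℂ) (1 / 32)) := by
    intro z hz
    have h2 := hlip z hz 0 h0mem
    have hz' : ‖z‖ ≤ 1 / 32 := by simpa using hz
    have h3 := norm_sub_norm_le (T z) (T 0)
    rw [sub_zero] at h2
    rw [mem_closedBall_zero_iff]
    linarith
  have hcontr : ContractingWith (1 / 2) (hmaps.restrict T _ _) := by
    refine ⟨by rw [← NNReal.coe_lt_coe]; norm_num, LipschitzWith.of_dist_le_mul fun x y => ?_⟩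
    have := hlip x x.2 y y.2
    rw [Subtype.dist_eq, Subtype.dist_eq, dist_eq_norm, dist_eq_norm]
    simpa using this
  obtain ⟨z, hzm, hzf, -⟩ := hcontr.exists_fixedPoint' Metric.isClosed_closedBall.isComplete hmaps
    h0mem (edist_ne_top _ _)
  have hz32 : ‖z‖ ≤ 1 / 32 := by simpa using hzm
  have hzs : Complex.sin (π * z) = e z := by
    have h2 : z - (Complex.sin (π * z) - e z) / π = z := hzf
    have h3 : (Complex.sin (π * z) - e z) / π = 0 := by linear_combination -h2
    rw [div_eq_zero_iff] at h3
    exact sub_eq_zero.mp (h3.resolve_right hp)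
  refine ⟨z, small z (by linarith) hzs, hzs, fun w hw hws => ?_⟩
  have hw32 := (small w hw.le hws).trans hδ
  have hwT : T w = w := by simp [hT, hws]
  have hzT : T z = z := hzf
  have := hlip w (by simpa using hw32) z hzm
  rw [hwT, hzT] at this
  have h5 : ‖w - z‖ = 0 := by linarith [norm_nonneg (w - z)]
  exact sub_eq_zero.mp (norm_eq_zero.mp h5)

lemma Delta2_eq {a₁ : ℝ} {K G : ℝ → ℂ}
    (hK : IntervalIntegrable K volume (a₁ / 2) (π - a₁ / 2))
    (hG : IntervalIntegrable G volume (a₁ / 2) (π - a₁ / 2)) (l : ℂ) :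
    Delta2 a₁ K G l = -Complex.cos (π * l) +
      (HInt (a₁ / 2) (π - a₁ / 2) (fun x => G x * (1 / 2) + K x * (-Complex.I / 2)) l +
       HInt (a₁ / 2) (π - a₁ / 2) (fun x => G x * (1 / 2) + K x * (Complex.I / 2)) (-l)) := by
  have hs : IntervalIntegrable (fun x => K x * Complex.sin (l * ((π - 2 * x : ℝ) : ℂ))) volume
      (a₁ / 2) (π - a₁ / 2) := hK.mul_continuousOn (by fun_prop)
  have hc : IntervalIntegrable (fun x => G x * Complex.cos (l * ((π - 2 * x : ℝ) : ℂ))) volume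
      (a₁ / 2) (π - a₁ / 2) := hG.mul_continuousOn (by fun_prop)
  rw [Delta2, add_assoc, ← intervalIntegral.integral_add hs hc, HInt, HInt,
    ← intervalIntegral.integral_add
      (HInt_integrable ((hG.mul_const _).add (hK.mul_const _)) _)
      (HInt_integrable ((hG.mul_const _).add (hK.mul_const _)) _)]
  congr 1
  apply intervalIntegral.integral_congr
  intro x _
  simp only [Complex.sin, Complex.cos]
  rw [show Complex.I * l * ((π - 2 * x : ℝ) : ℂ) = l * ((π - 2 * x : ℝ) : ℂ) * Complex.I by ring,
    show Complex.I * -l * ((π - 2 * x : ℝ) : ℂ) = -(l * ((π - 2 * x : ℝ) : ℂ)) * Complex.I by ring]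
  ring

lemma tendsto_int_half : Tendsto (fun n : ℤ => (n : ℝ) - 1 / 2) cofinite (cocompact ℝ) := by
  have h1 : Tendsto (fun n : ℤ => (n : ℝ)) cofinite (cocompact ℝ) := Int.tendsto_coe_cofinite
  exact (Homeomorph.subRight (1 / 2 : ℝ)).isClosedEmbedding.tendsto_cocompact.comp h1

lemma cos_shift (n : ℤ) (z : ℂ) :
    Complex.cos (π * (((n : ℂ) - 1 / 2) + z)) = (-1) ^ n * Complex.sin (π * z) := by
  rw [show (π : ℂ) * (((n : ℂ) - 1 / 2) + z) = (π * z - π / 2) + n * π by ring,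
    ← Complex.cos_sub_pi_div_two]
  exact n.cast_negOnePow ℂ ▸ Complex.cos_antiperiodic.add_int_mul_eq n

/-- The entire function `Δ₂` has infinitely many zeros accumulating near the
half-integers: there are `N ∈ ℕ` and complex numbers `λ_n` (`|n| ≥ N`) such that `λ_n`
is the unique zero of `Δ₂` in the disk `{|λ − (n − 1/2)| < 1/2}`, and
`λ_n = n − 1/2 + κ_n` with `κ_n → 0`. -/
theorem Delta2_eigenvalue_asymptotics (a₁ : ℝ) (ha₁ : 0 < a₁) (ha₁' : a₁ < π)
    (K G : ℝ → ℂ)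
    (hK : MemLp K 2 (volume.restrict (Ioo 0 π)))
    (hG : MemLp G 2 (volume.restrict (Ioo 0 π)))
    (hK0 : ∀ᵐ x ∂(volume : Measure ℝ), x ∉ Ioo (a₁ / 2) (π - a₁ / 2) → K x = 0)
    (hG0 : ∀ᵐ x ∂(volume : Measure ℝ), x ∉ Ioo (a₁ / 2) (π - a₁ / 2) → G x = 0) :
    ∃ (N : ℕ) (lam : ℤ → ℂ),
      (∀ n : ℤ, (N : ℤ) ≤ |n| →
        Delta2 a₁ K G (lam n) = 0 ∧ ‖lam n - ((n : ℂ) - 1 / 2)‖ < 1 / 2 ∧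
        ∀ μ : ℂ, ‖μ - ((n : ℂ) - 1 / 2)‖ < 1 / 2 → Delta2 a₁ K G μ = 0 → μ = lam n) ∧
      Tendsto (fun n : ℤ => lam n - ((n : ℂ) - 1 / 2)) cofinite (nhds 0) := by
  have hab : a₁ / 2 ≤ π - a₁ / 2 := by linarith
  have hInteg : ∀ f : ℝ → ℂ, MemLp f 2 (volume.restrict (Ioo 0 π)) →
      IntervalIntegrable f volume (a₁ / 2) (π - a₁ / 2) := by
    intro f hf
    rw [intervalIntegrable_iff_integrableOn_Ioc_of_le hab]
    have h1 : IntegrableOn f (Ioo 0 π) volume := hf.integrable (by norm_num)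
    refine h1.mono_set fun x hx => ⟨?_, ?_⟩
    · linarith [hx.1]
    · linarith [hx.2]
  have hKi := hInteg K hK
  have hGi := hInteg G hG
  set a := a₁ / 2
  set b := π - a₁ / 2
  set k₁ : ℝ → ℂ := fun x => G x * (1 / 2) + K x * (-Complex.I / 2) with hk₁
  set k₂ : ℝ → ℂ := fun x => G x * (1 / 2) + K x * (Complex.I / 2) with hk₂
  have hk₁i : IntervalIntegrable k₁ volume a b := (hGi.mul_const _).add (hKi.mul_const _)
  have hk₂i : IntervalIntegrable k₂ volume a b := (hGi.mul_const _).add (hKi.mul_const _)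
  have hder : ∀ g : ℝ → ℂ, IntervalIntegrable g volume a b →
      IntervalIntegrable (fun x => g x * (Complex.I * ((π - 2 * x : ℝ) : ℂ))) volume a b :=
    fun g hg => hg.mul_continuousOn (by fun_prop)
  set F : ℂ → ℂ := fun l => HInt a b k₁ l + HInt a b k₂ (-l) with hF
  set F' : ℂ → ℂ := fun l =>
    HInt a b (fun x => k₁ x * (Complex.I * ((π - 2 * x : ℝ) : ℂ))) l
      + -HInt a b (fun x => k₂ x * (Complex.I * ((π - 2 * x : ℝ) : ℂ))) (-l) with hF'
  have hFd : ∀ l, HasDerivAt F (F' l) l := by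
    intro l
    have h2 : HasDerivAt (fun l => HInt a b k₂ (-l)) _ l :=
      (HInt_hasDerivAt hk₂i (-l)).comp l (hasDerivAt_neg l)
    refine ((HInt_hasDerivAt hk₁i l).add h2).congr_deriv ?_
    simp [hF']
  have hD : ∀ l, Delta2 a₁ K G l = -Complex.cos (π * l) + F l := fun l => Delta2_eq hKi hGi l
  have hpos : ∀ g : ℝ → ℂ, IntervalIntegrable g volume a b → ∀ ε : ℝ, 0 < ε →
      ∀ᶠ n : ℤ in cofinite, ∀ z : ℂ, ‖z‖ ≤ 1 → ‖HInt a b g (((n : ℂ) - 1 / 2) + z)‖ < ε := by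
    intro g hg ε hε
    filter_upwards [tendsto_int_half.eventually (HInt_unif hab hg hε)] with n hn z hz
    have := hn z hz
    push_cast at this
    exact this
  have hneg : ∀ g : ℝ → ℂ, IntervalIntegrable g volume a b → ∀ ε : ℝ, 0 < ε →
      ∀ᶠ n : ℤ in cofinite, ∀ z : ℂ, ‖z‖ ≤ 1 → ‖HInt a b g (-(((n : ℂ) - 1 / 2) + z))‖ < ε := by
    intro g hg ε hε
    have ht : Tendsto (fun n : ℤ => -((n : ℝ) - 1 / 2)) cofinite (cocompact ℝ) :=
      (Homeomorph.neg ℝ).isClosedEmbedding.tendsto_cocompact.comp tendsto_int_half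
    filter_upwards [ht.eventually (HInt_unif hab hg hε)] with n hn z hz
    have := hn (-z) (by simpa using hz)
    push_cast at this
    rw [neg_add]
    exact this
  have main : ∀ δ : ℝ, 0 < δ → δ ≤ 1 / 32 → ∀ᶠ n : ℤ in cofinite,
      ∃ z : ℂ, ‖z‖ ≤ δ ∧ Delta2 a₁ K G (((n : ℂ) - 1 / 2) + z) = 0 ∧
        ∀ w : ℂ, ‖w‖ < 1 / 2 → Delta2 a₁ K G (((n : ℂ) - 1 / 2) + w) = 0 → w = z := by
    intro δ hδ hδ'
    have h2 : 0 < δ / 2 := by positivity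
    filter_upwards [hpos _ hk₁i _ h2, hneg _ hk₂i _ h2, hpos _ (hder _ hk₁i) _ h2,
      hneg _ (hder _ hk₂i) _ h2] with n n1 n2 n3 n4
    have hn1 : ‖((-1 : ℂ) ^ n)‖ = 1 := by simp
    have hsq : (-1 : ℂ) ^ n * (-1) ^ n = 1 := by
      rw [← mul_zpow]; simp
    have hiff : ∀ z : ℂ, Delta2 a₁ K G (((n : ℂ) - 1 / 2) + z) = 0 ↔
        Complex.sin (π * z) = (-1) ^ n * F (((n : ℂ) - 1 / 2) + z) := by
      intro z
      rw [hD, cos_shift]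
      constructor
      · intro h
        linear_combination (-(-1 : ℂ) ^ n) * h - Complex.sin (π * z) * hsq
      · intro h
        rw [h]
        linear_combination (-F (((n : ℂ) - 1 / 2) + z)) * hsq
    obtain ⟨z, hz1, hz2, hz3⟩ := sin_perturb (fun z => (-1) ^ n * F (((n : ℂ) - 1 / 2) + z))
      (fun z => (-1) ^ n * F' (((n : ℂ) - 1 / 2) + z))
      (fun z => ((hFd _).comp_const_add ((n : ℂ) - 1 / 2) z).const_mul _) δ hδ'
      (fun z hz => by
        rw [norm_mul, hn1, one_mul]
        refine (norm_add_le _ _).trans ?_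
        linarith [n1 z hz, n2 z hz])
      (fun z hz => by
        rw [norm_mul, hn1, one_mul]
        refine (norm_add_le _ _).trans ?_
        rw [norm_neg]
        linarith [n3 z hz, n4 z hz])
    exact ⟨z, hz1, (hiff z).2 hz2, fun w hw hw0 => hz3 w hw ((hiff w).1 hw0)⟩
  have hch : ∀ n : ℤ, ∃ z : ℂ, (∃ z : ℂ, ‖z‖ ≤ 1 / 32 ∧
        Delta2 a₁ K G (((n : ℂ) - 1 / 2) + z) = 0 ∧
        ∀ w : ℂ, ‖w‖ < 1 / 2 → Delta2 a₁ K G (((n : ℂ) - 1 / 2) + w) = 0 → w = z) →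
      (‖z‖ ≤ 1 / 32 ∧ Delta2 a₁ K G (((n : ℂ) - 1 / 2) + z) = 0 ∧
        ∀ w : ℂ, ‖w‖ < 1 / 2 → Delta2 a₁ K G (((n : ℂ) - 1 / 2) + w) = 0 → w = z) := by
    intro n
    by_cases h : ∃ z : ℂ, ‖z‖ ≤ 1 / 32 ∧
        Delta2 a₁ K G (((n : ℂ) - 1 / 2) + z) = 0 ∧
        ∀ w : ℂ, ‖w‖ < 1 / 2 → Delta2 a₁ K G (((n : ℂ) - 1 / 2) + w) = 0 → w = z
    · obtain ⟨z, hz⟩ := h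
      exact ⟨z, fun _ => hz⟩
    · exact ⟨0, fun h' => absurd h' h⟩
  choose κ hκ using hch
  have hev := main (1 / 32) (by norm_num) le_rfl
  have hfin := Filter.eventually_cofinite.mp hev
  obtain ⟨M, hM⟩ := (hfin.image (fun n : ℤ => n.natAbs)).bddAbove
  refine ⟨M + 1, fun n => ((n : ℂ) - 1 / 2) + κ n, fun n hn => ?_, ?_⟩
  · have hgood : ∃ z : ℂ, ‖z‖ ≤ 1 / 32 ∧
        Delta2 a₁ K G (((n : ℂ) - 1 / 2) + z) = 0 ∧
        ∀ w : ℂ, ‖w‖ < 1 / 2 → Delta2 a₁ K G (((n : ℂ) - 1 / 2) + w) = 0 → w = z := by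
      by_contra hbad
      have : n.natAbs ≤ M := hM ⟨n, hbad, rfl⟩
      rw [Int.abs_eq_natAbs] at hn
      omega
    obtain ⟨g1, g2, g3⟩ := hκ n hgood
    refine ⟨g2, ?_, fun μ hμ hμ0 => ?_⟩
    · rw [add_sub_cancel_left]; linarith
    · have := g3 (μ - ((n : ℂ) - 1 / 2)) hμ (by rw [add_sub_cancel]; exact hμ0)
      change μ = ((n : ℂ) - 1 / 2) + κ n
      rw [← this, add_sub_cancel]
  · simp only [add_sub_cancel_left]
    rw [Metric.tendsto_nhds]
    intro ε hε
    have hδ : 0 < min (ε / 2) (1 / 32) := by positivity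
    filter_upwards [hev, main _ hδ (min_le_right _ _)] with n hn1 hn2
    obtain ⟨g1, g2, g3⟩ := hκ n hn1
    obtain ⟨z, z1, z2, z3⟩ := hn2
    have : κ n = z := z3 _ (by linarith) g2
    rw [dist_zero_right, this]
    linarith [min_le_left (ε / 2) (1 / 32 : ℝ)]
end
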